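/- Let L be the splitting field of the polynomial X³ − 3X + 1 over ℚ (inside a fixed algebraic closure of ℚ). Then [L : ℚ] = 3, and the ideal generated by 2 in the ring of integers 𝒪_L of L is a prime ideal (that is, 2 is inert in L). -/

import Mathlib

open Polynomial

theorem irreducible_X_pow_three_sub_three_mul_X_add_one :
    Irreducible (X ^ 3 - 3 * X + 1 : ℚ[X]) := by
  have hdeg : (X ^ 3 - 3 * X + 1 : ℚ[X]).natDegree = 3 := by
    rw [← C_ofNat]; compute_degree!
  refine irreducible_of_degree_le_three_of_not_isRoot (by simp [hdeg]) fun x hx ↦ ?_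
  have hx' : x ^ 3 - 3 * x + 1 = 0 := by simpa using hx
  have hint : IsIntegral ℤ x := by
    refine ⟨X ^ 3 - C 3 * X + 1, by monicity!, ?_⟩
    simpa [eval₂_sub] using hx'
  obtain ⟨n, rfl⟩ := IsIntegrallyClosed.isIntegral_iff.mp hint
  have hn : n ^ 3 - 3 * n + 1 = 0 := by
    simp only [eq_intCast] at hx'
    exact_mod_cast hx'
  have hunit : IsUnit n := isUnit_iff_dvd_one.mpr ⟨3 - n ^ 2, by linear_combination hn⟩
  rcases Int.isUnit_iff.mp hunit with rfl | rfl <;> norm_num at hn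

/-- The other roots of `X³ - 3X + 1` are polynomials in a given one. -/
theorem X_pow_three_sub_three_mul_X_add_one_eq_prod {R : Type*} [CommRing R] {a : R}
    (ha : a ^ 3 - 3 * a + 1 = 0) :
    (X ^ 3 - 3 * X + 1 : R[X]) =
      (X - C a) * (X - C (a ^ 2 - 2)) * (X - C (2 - a - a ^ 2)) := by
  have h : (C a ^ 3 - 3 * C a + 1 : R[X]) = 0 := by
    simpa [C_ofNat] using congrArg (C : R → R[X]) ha
  simp only [map_sub, map_pow, C_ofNat]
  linear_combination (X * (C a + 1) + (-(C a) ^ 2 - C a + 1)) * h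

theorem finrank_splittingField_X_pow_three_sub_three_mul_X_add_one :
    Module.finrank ℚ (X ^ 3 - 3 * X + 1 : ℚ[X]).SplittingField = 3 := by
  set p : ℚ[X] := X ^ 3 - 3 * X + 1 with hp
  have hirr : Irreducible p := irreducible_X_pow_three_sub_three_mul_X_add_one
  have hdeg : p.natDegree = 3 := by
    rw [hp, ← C_ofNat]; compute_degree!
  have : Fact (Irreducible p) := ⟨hirr⟩
  have hroot : AdjoinRoot.root p ^ 3 - 3 * AdjoinRoot.root p + 1 = 0 := by
    simpa [hp] using AdjoinRoot.eval₂_root p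
  have hmem : AdjoinRoot.root p ∈ p.rootSet (AdjoinRoot p) := by
    rw [mem_rootSet]
    exact ⟨hirr.ne_zero, by simpa [hp, map_ofNat] using hroot⟩
  have : p.IsSplittingField ℚ (AdjoinRoot p) := by
    refine ⟨?_, ?_⟩
    · have hmap : p.map (algebraMap ℚ (AdjoinRoot p)) = X ^ 3 - 3 * X + 1 := by simp [hp]
      rw [hmap, X_pow_three_sub_three_mul_X_add_one_eq_prod hroot]
      exact ((Splits.X_sub_C _).mul (Splits.X_sub_C _)).mul (Splits.X_sub_C _)
    · exact top_unique ((AdjoinRoot.adjoinRoot_eq_top (f := p)).ge.trans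
        (Algebra.adjoin_mono (by simpa using hmem)))
  rw [← (IsSplittingField.algEquiv (AdjoinRoot p) p).toLinearEquiv.finrank_eq,
    (AdjoinRoot.powerBasis hirr.ne_zero).finrank, AdjoinRoot.powerBasis_dim, hdeg]

/-- A finite field of characteristic two with a root of `X³ + X + 1` whose cardinality divides `8`
has exactly `8` elements. -/
theorem card_eq_eight_of_root {F : Type*} [Field F] (h2 : (2 : F) = 0) {a : F}
    (ha : a ^ 3 - 3 * a + 1 = 0) (hcard : Nat.card F ∣ 8) : Nat.card F = 8 := by
  have : Finite F := Nat.finite_of_card_ne_zero (by rintro h; simp [h] at hcard)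
  have := Fintype.ofFinite F
  have hone : 1 < Nat.card F := Finite.one_lt_card
  have ha0 : a ≠ 0 := by rintro rfl; simp at ha
  have ha1 : a ≠ 1 := by
    rintro rfl
    exact one_ne_zero (α := F) (by linear_combination -ha)
  have h7 : a ^ 7 = 1 := by
    linear_combination (a ^ 4 + 3 * a ^ 2 - a + 9) * ha + (-3 * a ^ 2 + 14 * a - 5) * h2
  have : Fact (Nat.Prime 7) := ⟨by norm_num⟩
  have hord : orderOf a = 7 := orderOf_eq_prime h7 ha1
  have hdvd : 7 ∣ Nat.card F - 1 := by
    rw [← hord, Nat.card_eq_fintype_card]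
    exact orderOf_dvd_of_pow_eq_one (FiniteField.pow_card_sub_one_eq_one a ha0)
  have hle := Nat.le_of_dvd (by norm_num) hcard
  omega

/-- If a Dedekind domain of rank `3` over `ℤ` contains a root of `X³ - 3X + 1`, then `2` is inert
in it. -/
theorem isPrime_span_two_of_root {S : Type*} [CommRing S] [IsDedekindDomain S]
    [Module.Free ℤ S] [Module.Finite ℤ S] (hS : Module.finrank ℤ S = 3) {a : S}
    (ha : a ^ 3 - 3 * a + 1 = 0) : (Ideal.span {(2 : S)}).IsPrime := by
  have hnorm : Ideal.absNorm (Ideal.span {(2 : S)}) = 8 := by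
    have h := Algebra.norm_algebraMap (S := S) (2 : ℤ)
    rw [hS, map_ofNat] at h
    rw [Ideal.absNorm_span_singleton, h]
    norm_num
  have hne : Ideal.span {(2 : S)} ≠ ⊤ := fun h ↦ by simp [h] at hnorm
  obtain ⟨P, hP, hle⟩ := Ideal.exists_le_maximal _ hne
  have hdvd := Ideal.dvd_iff_le.mpr hle
  have hcard : Ideal.absNorm P = 8 := by
    let := Ideal.Quotient.field P
    refine card_eq_eight_of_root (F := S ⧸ P) (a := Ideal.Quotient.mk P a) ?_ ?_ ?_
    · simpa [map_ofNat] using Ideal.Quotient.eq_zero_iff_mem.mpr (hle (Ideal.mem_span_singleton_self 2))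
    · simpa [map_ofNat] using congrArg (Ideal.Quotient.mk P) ha
    · exact hnorm ▸ map_dvd Ideal.absNorm hdvd
  obtain ⟨J, hJ⟩ := hdvd
  have hJ1 : Ideal.absNorm J = 1 := by
    have h := congrArg Ideal.absNorm hJ
    rw [map_mul, hnorm, hcard] at h
    omega
  rw [hJ, Ideal.absNorm_eq_one_iff.mp hJ1, Ideal.mul_top]
  exact hP.isPrime

/-- the splitting field `L` of `X³ - 3X + 1` over `ℚ` has degree 3,
and the ideal generated by `2` in the ring of integers of `L` (the integral
closure of `ℤ` in `L`) is prime, i.e. `2` is inert in `L`. -/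
theorem stmt14 :
    Module.finrank ℚ (X ^ 3 - 3 * X + 1 : ℚ[X]).SplittingField = 3 ∧
      (Ideal.span
        {(2 : integralClosure ℤ (X ^ 3 - 3 * X + 1 : ℚ[X]).SplittingField)}).IsPrime := by
  have hfin := finrank_splittingField_X_pow_three_sub_three_mul_X_add_one
  refine ⟨hfin, ?_⟩
  have hirr := irreducible_X_pow_three_sub_three_mul_X_add_one
  set p : ℚ[X] := X ^ 3 - 3 * X + 1 with hp
  have : NumberField p.SplittingField := {}
  obtain ⟨x, hx⟩ := (SplittingField.splits p).exists_eval_eq_zero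
    (by rw [degree_map]; exact hirr.degree_pos.ne')
  have hx' : x ^ 3 - 3 * x + 1 = 0 := by simpa [hp] using hx
  have hint : IsIntegral ℤ x := by
    refine ⟨X ^ 3 - C 3 * X + 1, by monicity!, ?_⟩
    simpa [eval₂_sub] using hx'
  exact isPrime_span_two_of_root (S := NumberField.RingOfIntegers p.SplittingField)
    ((NumberField.RingOfIntegers.rank _).trans hfin) (a := ⟨x, hint⟩) (Subtype.ext hx')
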